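/- arXiv:2210.05500 — 2 statements merged into one kernel-verified Lean document; each statement's English description precedes it below -/
import Mathlib

section
/- Assume that for every g ∈ G one has ∑_{h∈G} H²(μ_{gh}, μ_h) < ∞. Then for every g ∈ G, the infinite product ∏_{h∈G} (1 − H²(μ_{gh}^t, μ_h^t)) (the limit of partial products over finite subsets of G, each factor lying in (0,1]) converges to 1 as t → 0⁺. -/
/-!
The squared Hellinger distance `H²` is subadditive and homogeneous on pairs of finite measures. The
common component `(1 - t) • ν` therefore contributes nothing, so `H²(μ_{gh}^t, μ_h^t)` is at most
`t * H²(μ_{gh}, μ_h)`. Each factor thus tends to `1` as `t → 0⁺`, with the summable family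
`H²(μ_{gh}, μ_h)` as dominating bound, and dominated convergence for infinite products applies. The
factors are positive because `1 - H²(μ_{gh}, μ_h)` is the integral of the geometric mean of the two
densities, which vanishes only for mutually singular measures.
-/

open MeasureTheory Filter Set
open scoped ENNReal NNReal Topology

noncomputable section

/-- The squared Hellinger distance `H²(α,β) = ½∫(√(dα/dζ) − √(dβ/dζ))² dζ`,
computed with the reference probability measure `ζ = ½(α+β)`. -/
def hellingerSq {Ω : Type*} [MeasurableSpace Ω] (α β : Measure Ω) : ℝ :=
  (1 / 2) * ∫ ω,
      (Real.sqrt ((α.rnDeriv ((2 : ℝ≥0∞)⁻¹ • (α + β)) ω).toReal) -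
        Real.sqrt ((β.rnDeriv ((2 : ℝ≥0∞)⁻¹ • (α + β)) ω).toReal)) ^ 2
    ∂((2 : ℝ≥0∞)⁻¹ • (α + β))

/-- The convex combination `(1−t)·ν + t·μ` of two measures. -/
def mix {Ω : Type*} [MeasurableSpace Ω] (t : ℝ) (ν μ : Measure Ω) : Measure Ω :=
  ENNReal.ofReal (1 - t) • ν + ENNReal.ofReal t • μ

lemma sq_sqrt_sub_sqrt {a b : ℝ} (ha : 0 ≤ a) (hb : 0 ≤ b) :
    (√a - √b) ^ 2 = a + b - 2 * √(a * b) := by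
  rw [sub_sq, Real.sq_sqrt ha, Real.sq_sqrt hb, Real.sqrt_mul ha]
  ring

lemma sqrt_mul_add_sqrt_mul_le {a b c d : ℝ} (ha : 0 ≤ a) (hb : 0 ≤ b) (hc : 0 ≤ c)
    (hd : 0 ≤ d) : √(a * b) + √(c * d) ≤ √((a + c) * (b + d)) := by
  apply Real.le_sqrt_of_sq_le
  rw [Real.sqrt_mul ha, Real.sqrt_mul hc]
  have hcross := sq_nonneg (√a * √d - √c * √b)
  calc
    (√a * √b + √c * √d) ^ 2 ≤ (√a ^ 2 + √c ^ 2) * (√b ^ 2 + √d ^ 2) := by linarith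
    _ = (a + c) * (b + d) := by
      rw [Real.sq_sqrt ha, Real.sq_sqrt hb, Real.sq_sqrt hc, Real.sq_sqrt hd]

lemma sq_sqrt_add_sub_sqrt_add_le {a b c d : ℝ} (ha : 0 ≤ a) (hb : 0 ≤ b) (hc : 0 ≤ c)
    (hd : 0 ≤ d) : (√(a + c) - √(b + d)) ^ 2 ≤ (√a - √b) ^ 2 + (√c - √d) ^ 2 := by
  rw [sq_sqrt_sub_sqrt (add_nonneg ha hc) (add_nonneg hb hd), sq_sqrt_sub_sqrt ha hb,
    sq_sqrt_sub_sqrt hc hd]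
  linarith [sqrt_mul_add_sqrt_mul_le ha hb hc hd]

lemma sq_sqrt_mul_sub_sqrt_mul {r : ℝ} (hr : 0 ≤ r) (a b : ℝ) :
    (√(r * a) - √(r * b)) ^ 2 = r * (√a - √b) ^ 2 := by
  rw [Real.sqrt_mul hr, Real.sqrt_mul hr, ← mul_sub, mul_pow, Real.sq_sqrt hr]

section Hellinger

variable {Ω : Type*} [MeasurableSpace Ω]

lemma integrable_sqrt_rnDeriv_mul_rnDeriv (α β ζ : Measure Ω) [IsFiniteMeasure α]
    [IsFiniteMeasure β] :
    Integrable (fun ω => √((α.rnDeriv ζ ω).toReal * (β.rnDeriv ζ ω).toReal)) ζ := by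
  refine ((Measure.integrable_toReal_rnDeriv (μ := α)).add
    (Measure.integrable_toReal_rnDeriv (μ := β))).mono' (by fun_prop) (ae_of_all _ fun ω => ?_)
  have ha : 0 ≤ (α.rnDeriv ζ ω).toReal := ENNReal.toReal_nonneg
  have hb : 0 ≤ (β.rnDeriv ζ ω).toReal := ENNReal.toReal_nonneg
  rw [Real.norm_of_nonneg (Real.sqrt_nonneg _), Pi.add_apply]
  exact Real.sqrt_le_iff.2 ⟨add_nonneg ha hb, by nlinarith⟩

lemma integrable_sq_sqrt_rnDeriv_sub (α β ζ : Measure Ω) [IsFiniteMeasure α]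
    [IsFiniteMeasure β] :
    Integrable (fun ω => (√(α.rnDeriv ζ ω).toReal - √(β.rnDeriv ζ ω).toReal) ^ 2) ζ := by
  simp only [sq_sqrt_sub_sqrt ENNReal.toReal_nonneg ENNReal.toReal_nonneg]
  exact (Measure.integrable_toReal_rnDeriv.add Measure.integrable_toReal_rnDeriv).sub
    ((integrable_sqrt_rnDeriv_mul_rnDeriv α β ζ).const_mul 2)

lemma hellingerSq_eq_integral {α β ζ : Measure Ω} [SigmaFinite α] [SigmaFinite β]
    [SigmaFinite ζ] (hα : α ≪ ζ) (hβ : β ≪ ζ) :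
    hellingerSq α β =
      (1 / 2) * ∫ ω, (√(α.rnDeriv ζ ω).toReal - √(β.rnDeriv ζ ω).toReal) ^ 2 ∂ζ := by
  have hsigma : SigmaFinite ((2 : ℝ≥0∞)⁻¹ • (α + β)) := by
    simpa [ENNReal.smul_def] using SMul.sigmaFinite (μ := α + β) 2⁻¹
  have hdom : α + β ≪ (2 : ℝ≥0∞)⁻¹ • (α + β) := Measure.absolutelyContinuous_smul (by simp)
  have hmζ : (2 : ℝ≥0∞)⁻¹ • (α + β) ≪ ζ := (hα.add_left hβ).smul_left _
  unfold hellingerSq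
  generalize (2 : ℝ≥0∞)⁻¹ • (α + β) = m at *
  obtain ⟨hαm, hβm⟩ := Measure.AbsolutelyContinuous.add_left_iff.1 hdom
  rw [← integral_toReal_rnDeriv_mul hmζ]
  congr 1
  apply integral_congr_ae
  filter_upwards [Measure.rnDeriv_mul_rnDeriv (κ := ζ) hαm,
    Measure.rnDeriv_mul_rnDeriv (κ := ζ) hβm] with ω hα_chain hβ_chain
  rw [← hα_chain, ← hβ_chain, Pi.mul_apply, Pi.mul_apply, mul_comm (α.rnDeriv m ω),
    mul_comm (β.rnDeriv m ω), ENNReal.toReal_mul, ENNReal.toReal_mul,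
    sq_sqrt_mul_sub_sqrt_mul ENNReal.toReal_nonneg]

lemma hellingerSq_nonneg (α β : Measure Ω) : 0 ≤ hellingerSq α β :=
  mul_nonneg (by norm_num) (integral_nonneg fun _ => sq_nonneg _)

@[simp]
lemma hellingerSq_self (α : Measure Ω) : hellingerSq α α = 0 := by
  simp [hellingerSq]

lemma hellingerSq_smul (r : ℝ≥0) (α β : Measure Ω) [SigmaFinite α] [SigmaFinite β] :
    hellingerSq (r • α) (r • β) = r * hellingerSq α β := by
  obtain ⟨hα, hβ⟩ := Measure.AbsolutelyContinuous.add_left_iff.1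
    (Measure.AbsolutelyContinuous.refl (α + β))
  rw [hellingerSq_eq_integral (hα.smul_left r) (hβ.smul_left r), hellingerSq_eq_integral hα hβ,
    mul_left_comm, ← integral_const_mul (r : ℝ)]
  congr 1
  apply integral_congr_ae
  filter_upwards [Measure.rnDeriv_smul_left' α (α + β) r, Measure.rnDeriv_smul_left' β (α + β) r]
    with ω hα_smul hβ_smul
  rw [hα_smul, hβ_smul, Pi.smul_apply, Pi.smul_apply, ENNReal.toReal_smul, ENNReal.toReal_smul,
    NNReal.smul_def, NNReal.smul_def, smul_eq_mul, smul_eq_mul,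
    sq_sqrt_mul_sub_sqrt_mul r.coe_nonneg]

lemma hellingerSq_add_le (α α' β β' : Measure Ω) [IsFiniteMeasure α] [IsFiniteMeasure α']
    [IsFiniteMeasure β] [IsFiniteMeasure β'] :
    hellingerSq (α + α') (β + β') ≤ hellingerSq α β + hellingerSq α' β' := by
  obtain ⟨ζ, hζ⟩ : ∃ ζ, ζ = (α + α') + (β + β') := ⟨_, rfl⟩
  have hfin : IsFiniteMeasure ζ := hζ ▸ inferInstance
  have hdom := Measure.AbsolutelyContinuous.add_left_iff.1 hζ.symm.absolutelyContinuous
  obtain ⟨hα, hα'⟩ := Measure.AbsolutelyContinuous.add_left_iff.1 hdom.1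
  obtain ⟨hβ, hβ'⟩ := Measure.AbsolutelyContinuous.add_left_iff.1 hdom.2
  rw [hellingerSq_eq_integral hdom.1 hdom.2, hellingerSq_eq_integral hα hβ,
    hellingerSq_eq_integral hα' hβ', ← mul_add, ← integral_add
      (integrable_sq_sqrt_rnDeriv_sub α β ζ) (integrable_sq_sqrt_rnDeriv_sub α' β' ζ)]
  gcongr 1 / 2 * ?_
  refine integral_mono_ae (integrable_sq_sqrt_rnDeriv_sub _ _ _)
    ((integrable_sq_sqrt_rnDeriv_sub _ _ _).add (integrable_sq_sqrt_rnDeriv_sub _ _ _)) ?_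
  filter_upwards [Measure.rnDeriv_add α α' ζ, Measure.rnDeriv_add β β' ζ,
    α.rnDeriv_ne_top ζ, α'.rnDeriv_ne_top ζ, β.rnDeriv_ne_top ζ, β'.rnDeriv_ne_top ζ]
    with ω hα_add hβ_add hα_top hα'_top hβ_top hβ'_top
  rw [hα_add, hβ_add, Pi.add_apply, Pi.add_apply, ENNReal.toReal_add hα_top hα'_top,
    ENNReal.toReal_add hβ_top hβ'_top]
  exact sq_sqrt_add_sub_sqrt_add_le ENNReal.toReal_nonneg ENNReal.toReal_nonneg
    ENNReal.toReal_nonneg ENNReal.toReal_nonneg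

lemma hellingerSq_mix_le {t : ℝ} (ht : 0 ≤ t) (ν α β : Measure Ω) [IsFiniteMeasure ν]
    [IsFiniteMeasure α] [IsFiniteMeasure β] :
    hellingerSq (mix t ν α) (mix t ν β) ≤ t * hellingerSq α β := by
  have hmix (μ : Measure Ω) : mix t ν μ = (1 - t).toNNReal • ν + t.toNNReal • μ := rfl
  calc
    hellingerSq (mix t ν α) (mix t ν β) ≤
        hellingerSq ((1 - t).toNNReal • ν) ((1 - t).toNNReal • ν) +
          hellingerSq (t.toNNReal • α) (t.toNNReal • β) := by
      rw [hmix, hmix]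
      exact hellingerSq_add_le _ _ _ _
    _ = t * hellingerSq α β := by
      rw [hellingerSq_self, zero_add, hellingerSq_smul, Real.coe_toNNReal t ht]

lemma tendsto_hellingerSq_mix (ν α β : Measure Ω) [IsFiniteMeasure ν] [IsFiniteMeasure α]
    [IsFiniteMeasure β] :
    Tendsto (fun t => hellingerSq (mix t ν α) (mix t ν β)) (𝓝[≥] 0) (𝓝 0) := by
  have hlin : Tendsto (fun t : ℝ => t * hellingerSq α β) (𝓝[≥] 0) (𝓝 0) := by
    have hcont : Continuous fun t : ℝ => t * hellingerSq α β := by fun_prop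
    exact (hcont.tendsto' 0 0 (zero_mul _)).mono_left nhdsWithin_le_nhds
  refine tendsto_of_tendsto_of_tendsto_of_le_of_le' tendsto_const_nhds hlin
    (.of_forall fun _ => hellingerSq_nonneg _ _) ?_
  filter_upwards [self_mem_nhdsWithin] with t ht using hellingerSq_mix_le ht ν α β

lemma hellingerSq_eq_sub_integral_sqrt {α β ζ : Measure Ω} [IsFiniteMeasure α]
    [IsFiniteMeasure β] [SigmaFinite ζ] (hα : α ≪ ζ) (hβ : β ≪ ζ) :
    hellingerSq α β = (α.real univ + β.real univ) / 2 -
      ∫ ω, √((α.rnDeriv ζ ω).toReal * (β.rnDeriv ζ ω).toReal) ∂ζ := by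
  have hα_int : Integrable (fun ω => (α.rnDeriv ζ ω).toReal) ζ :=
    Measure.integrable_toReal_rnDeriv
  have hβ_int : Integrable (fun ω => (β.rnDeriv ζ ω).toReal) ζ :=
    Measure.integrable_toReal_rnDeriv
  rw [hellingerSq_eq_integral hα hβ]
  simp only [sq_sqrt_sub_sqrt ENNReal.toReal_nonneg ENNReal.toReal_nonneg]
  rw [integral_sub (by fun_prop) ((integrable_sqrt_rnDeriv_mul_rnDeriv α β ζ).const_mul 2),
    integral_add hα_int hβ_int, integral_const_mul, Measure.integral_toReal_rnDeriv hα,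
    Measure.integral_toReal_rnDeriv hβ]
  ring

lemma mutuallySingular_of_ae_rnDeriv_eq_zero_or {α β ζ : Measure Ω}
    [α.HaveLebesgueDecomposition ζ] [β.HaveLebesgueDecomposition ζ] (hα : α ≪ ζ) (hβ : β ≪ ζ)
    (h : ∀ᵐ ω ∂ζ, α.rnDeriv ζ ω = 0 ∨ β.rnDeriv ζ ω = 0) : α ⟂ₘ β := by
  refine .mk (s := {ω | α.rnDeriv ζ ω = 0}) (t := {ω | α.rnDeriv ζ ω ≠ 0}) ?_ ?_
    fun ω _ => em _
  · refine measure_eq_zero_iff_ae_notMem.2 ?_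
    filter_upwards [Measure.rnDeriv_pos hα] with ω hpos using hpos.ne'
  · refine measure_eq_zero_iff_ae_notMem.2 ?_
    filter_upwards [hβ.ae_le h, Measure.rnDeriv_pos hβ] with ω hzero hpos hne
    exact hzero.elim hne hpos.ne'

lemma hellingerSq_lt_one_of_not_mutuallySingular {α β : Measure Ω} [IsProbabilityMeasure α]
    [IsProbabilityMeasure β] (h : ¬ α ⟂ₘ β) : hellingerSq α β < 1 := by
  obtain ⟨hα, hβ⟩ := Measure.AbsolutelyContinuous.add_left_iff.1
    (Measure.AbsolutelyContinuous.refl (α + β))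
  rw [hellingerSq_eq_sub_integral_sqrt hα hβ, probReal_univ, probReal_univ]
  suffices haff : ∫ ω, √((α.rnDeriv (α + β) ω).toReal * (β.rnDeriv (α + β) ω).toReal)
      ∂(α + β) ≠ 0 by
    linarith [(integral_nonneg fun _ => Real.sqrt_nonneg _).lt_of_ne' haff]
  contrapose! h
  rw [integral_eq_zero_iff_of_nonneg (fun _ => Real.sqrt_nonneg _)
    (integrable_sqrt_rnDeriv_mul_rnDeriv α β _)] at h
  refine mutuallySingular_of_ae_rnDeriv_eq_zero_or hα hβ ?_
  filter_upwards [h, α.rnDeriv_ne_top (α + β), β.rnDeriv_ne_top (α + β)]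
    with ω hzero hα_top hβ_top
  rw [Pi.zero_apply, Real.sqrt_eq_zero (by positivity), ← ENNReal.toReal_mul,
    ENNReal.toReal_eq_zero_iff] at hzero
  exact mul_eq_zero.1 (hzero.resolve_right (ENNReal.mul_ne_top hα_top hβ_top))

theorem prod_tendsto_one_general {ι : Type*} (α β : ι → Measure Ω)
    [∀ i, IsProbabilityMeasure (α i)] [∀ i, IsProbabilityMeasure (β i)]
    (hαβ : ∀ i, ¬ α i ⟂ₘ β i) (ν : Measure Ω) [IsFiniteMeasure ν]
    (hsum : Summable fun i => hellingerSq (α i) (β i)) :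
    (∀ t ∈ Icc (0 : ℝ) 1,
      (∀ i, 1 - hellingerSq (mix t ν (α i)) (mix t ν (β i)) ∈ Ioc (0 : ℝ) 1) ∧
      Multipliable fun i => 1 - hellingerSq (mix t ν (α i)) (mix t ν (β i))) ∧
    Tendsto (fun t : ℝ => ∏' i, (1 - hellingerSq (mix t ν (α i)) (mix t ν (β i))))
      (𝓝[>] 0) (𝓝 1) := by
  have hle (t : ℝ) (ht : t ∈ Icc (0 : ℝ) 1) (i : ι) :
      hellingerSq (mix t ν (α i)) (mix t ν (β i)) ≤ hellingerSq (α i) (β i) :=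
    (hellingerSq_mix_le ht.1 ν _ _).trans
      (mul_le_of_le_one_left (hellingerSq_nonneg _ _) ht.2)
  refine ⟨fun t ht => ⟨fun i => ?_, ?_⟩, ?_⟩
  · have hlt := (hle t ht i).trans_lt (hellingerSq_lt_one_of_not_mutuallySingular (hαβ i))
    exact ⟨sub_pos.2 hlt, sub_le_self 1 (hellingerSq_nonneg _ _)⟩
  · simpa only [sub_eq_add_neg] using Real.multipliable_one_add_of_summable
      (hsum.of_nonneg_of_le (fun _ => hellingerSq_nonneg _ _) (hle t ht)).neg
  · have hlim (i : ι) : Tendsto (fun t => -hellingerSq (mix t ν (α i)) (mix t ν (β i)))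
        (𝓝[>] 0) (𝓝 0) := by
      simpa using ((tendsto_hellingerSq_mix ν (α i) (β i)).mono_left
        (nhdsWithin_mono 0 Ioi_subset_Ici_self)).neg
    have hbound : ∀ᶠ t in 𝓝[>] (0 : ℝ), ∀ i,
        ‖-hellingerSq (mix t ν (α i)) (mix t ν (β i))‖ ≤ hellingerSq (α i) (β i) := by
      filter_upwards [Ioc_mem_nhdsGT one_pos] with t ht i
      rw [norm_neg, Real.norm_of_nonneg (hellingerSq_nonneg _ _)]
      exact hle t (Ioc_subset_Icc_self ht) i
    simpa only [← sub_eq_add_neg, add_zero, tprod_one] using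
      tendsto_tprod_one_add_of_dominated_convergence hsum hlim hbound

end Hellinger

/-- if `∑_h H²(μ_{gh}, μ_h) < ∞` for every `g`, then for every `g` the
infinite product `∏_{h∈G} (1 − H²(μ_{gh}^t, μ_h^t))` (each factor lying in `(0,1]`,
and the product converging over finite subsets) tends to `1` as `t → 0⁺`. -/
theorem prod_tendsto_one
    {G X₀ : Type*} [Group G] [Countable G] [Infinite G]
    [MeasurableSpace X₀] [StandardBorelSpace X₀]
    (μs : G → Measure X₀) (hprob : ∀ g : G, IsProbabilityMeasure (μs g))
    (hequiv : ∀ g h : G, μs g ≪ μs h)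
    (ν : Measure X₀) (hν : IsProbabilityMeasure ν)
    (hsum : ∀ g : G, Summable (fun h : G => hellingerSq (μs (g * h)) (μs h))) :
    ∀ g : G,
      (∀ t ∈ Set.Icc (0:ℝ) 1,
        (∀ h : G,
          1 - hellingerSq (mix t ν (μs (g * h))) (mix t ν (μs h)) ∈ Set.Ioc (0:ℝ) 1) ∧
        Multipliable (fun h : G =>
          1 - hellingerSq (mix t ν (μs (g * h))) (mix t ν (μs h)))) ∧
      Tendsto (fun t : ℝ =>
          ∏' h : G, (1 - hellingerSq (mix t ν (μs (g * h))) (mix t ν (μs h))))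
        (𝓝[>] 0) (𝓝 1) :=
  fun g => prod_tendsto_one_general (fun h => μs (g * h)) μs
    (fun h hsing => IsProbabilityMeasure.ne_zero (μs (g * h))
      (Measure.eq_zero_of_absolutelyContinuous_of_mutuallySingular (hequiv (g * h) h) hsing))
    ν (hsum g)
end
end

section
/- Let G be a countable group, let (X,μ) and (Y,ν) be standard probability spaces carrying nonsingular G-actions, and let ψ : X → Y be a measurable G-equivariant map with ψ_*μ = ν. If a sequence (η_n) of probability measures on G is strongly recurrent for the action G ↷ (X,μ), then (η_n) is strongly recurrent for the action G ↷ (Y,ν). -/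
open MeasureTheory Filter Set
open scoped ENNReal NNReal Topology

noncomputable section

/-- The sequence `(η n)` of probability measures on `G` is strongly recurrent for
the nonsingular action `act` on `(X, μ)`. -/
def StronglyRecurrentSeq {G X : Type*} [Group G] [MeasurableSpace X] (μ : Measure X)
    (act : G → X → X) (η : ℕ → G → ℝ≥0∞) : Prop :=
  Tendsto (fun n =>
      ∑' h : G, (η n h) ^ 2 *
        ∫⁻ x, (∑' k : G, η n (h * k⁻¹) * (μ.map (act k⁻¹)).rnDeriv μ x)⁻¹ ∂μ)
    atTop (𝓝 0)

/-!
For each `h`, the sum over `k` is the density with respect to `μ` of a mixture of translates of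
`μ`. The factor map `ψ` sends this mixture to the corresponding mixture of translates of `ν`, so
the density on `Y` is the conditional expectation of the density on `X` given `ψ`. As `s ↦ s⁻¹` is
convex, conditional Jensen bounds each integral over `Y` by the corresponding integral over `X`.
-/

lemma two_mul_le_inv_add_mul_sq (s t : ℝ≥0∞) : 2 * t ≤ s⁻¹ + s * t ^ 2 := by
  rcases eq_or_ne s 0 with rfl | hs₀
  · simp
  rcases eq_or_ne t 0 with rfl | ht₀
  · simp
  rcases eq_or_ne s ∞ with rfl | hs
  · simp [ENNReal.top_mul, ht₀]
  rcases eq_or_ne t ∞ with rfl | ht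
  · simp [ENNReal.mul_top, hs₀]
  lift s to ℝ≥0 using hs
  lift t to ℝ≥0 using ht
  have hs' : s ≠ 0 := ENNReal.coe_ne_zero.1 hs₀
  rw [← ENNReal.coe_inv hs']
  norm_cast
  exact two_mul_le_add_of_sq_le_mul zero_le zero_le (inv_mul_cancel_left₀ hs' _).ge

section Jensen

variable {X Y : Type*} [MeasurableSpace X] [MeasurableSpace Y] {μ : Measure X} {ν : Measure Y}

lemma lintegral_le_of_forall_simpleFunc_le [SigmaFinite ν] {f : Y → ℝ≥0∞} {C : ℝ≥0∞}
    (h : ∀ g : SimpleFunc Y ℝ≥0, (∀ y, (g y : ℝ≥0∞) ≤ f y) → ∫⁻ y, g y ∂ν ≠ ∞ →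
      ∫⁻ y, g y ∂ν ≤ C) :
    ∫⁻ y, f y ∂ν ≤ C := by
  rw [lintegral_eq_nnreal]
  refine iSup₂_le fun φ hφ => le_of_forall_lt fun L hL => ?_
  rw [← SimpleFunc.lintegral_eq_lintegral] at hL
  obtain ⟨g, hgφ, hg_fin, hLg⟩ := SimpleFunc.exists_lt_lintegral_simpleFunc_of_lt_lintegral hL
  exact hLg.trans_le
    (h g (fun y => (ENNReal.coe_le_coe.2 (hgφ y)).trans (hφ y)) hg_fin.ne)

/-- Conditional Jensen inequality for `s ↦ s⁻¹`: the hypothesis `hsf` says that `f ∘ ψ` is the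
conditional expectation of `s` given `ψ`. -/
lemma lintegral_inv_le_of_map_withDensity_eq [SigmaFinite ν] {ψ : X → Y}
    (hψ : MeasurePreserving ψ μ ν) {s : X → ℝ≥0∞} (hs : AEMeasurable s μ)
    {f : Y → ℝ≥0∞} (hf : AEMeasurable f ν)
    (hsf : (μ.withDensity s).map ψ = ν.withDensity f) :
    ∫⁻ y, (f y)⁻¹ ∂ν ≤ ∫⁻ x, (s x)⁻¹ ∂μ := by
  refine lintegral_le_of_forall_simpleFunc_le fun g hgf hg_fin => ?_
  have hg : Measurable fun y => (g y : ℝ≥0∞) := g.measurable.coe_nnreal_ennreal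
  have h_sq : ∫⁻ y, f y * (g y : ℝ≥0∞) ^ 2 ∂ν ≤ ∫⁻ y, g y ∂ν := by
    refine lintegral_mono fun y => ?_
    calc f y * (g y : ℝ≥0∞) ^ 2 = f y * g y * g y := by ring
      _ ≤ f y * (f y)⁻¹ * g y := by gcongr; exact hgf y
      _ ≤ g y := mul_le_of_le_one_left' (ENNReal.mul_inv_le_one _)
  have h_transfer : ∫⁻ x, s x * (g (ψ x) : ℝ≥0∞) ^ 2 ∂μ = ∫⁻ y, f y * (g y : ℝ≥0∞) ^ 2 ∂ν := by
    have hg_sq := hg.pow_const 2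
    calc ∫⁻ x, s x * (g (ψ x) : ℝ≥0∞) ^ 2 ∂μ
        = ∫⁻ x, (g (ψ x) : ℝ≥0∞) ^ 2 ∂μ.withDensity s :=
          (lintegral_withDensity_eq_lintegral_mul₀ hs
            (hg_sq.comp hψ.measurable).aemeasurable).symm
      _ = ∫⁻ y, (g y : ℝ≥0∞) ^ 2 ∂ν.withDensity f := by
          rw [← hsf, lintegral_map hg_sq hψ.measurable]
      _ = ∫⁻ y, f y * (g y : ℝ≥0∞) ^ 2 ∂ν :=
          lintegral_withDensity_eq_lintegral_mul₀ hf hg_sq.aemeasurable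
  refine (ENNReal.add_le_add_iff_right hg_fin).1 ?_
  calc ∫⁻ y, g y ∂ν + ∫⁻ y, g y ∂ν = ∫⁻ x, 2 * (g (ψ x) : ℝ≥0∞) ∂μ := by
        rw [← two_mul, ← hψ.lintegral_comp hg,
          lintegral_const_mul 2 (f := fun x => (g (ψ x) : ℝ≥0∞)) (hg.comp hψ.measurable)]
    _ ≤ ∫⁻ x, ((s x)⁻¹ + s x * (g (ψ x) : ℝ≥0∞) ^ 2) ∂μ :=
        lintegral_mono fun x => two_mul_le_inv_add_mul_sq _ _
    _ = ∫⁻ x, (s x)⁻¹ ∂μ + ∫⁻ y, f y * (g y : ℝ≥0∞) ^ 2 ∂ν := by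
        rw [lintegral_add_left' (f := fun x => (s x)⁻¹) hs.inv, h_transfer]
    _ ≤ ∫⁻ x, (s x)⁻¹ ∂μ + ∫⁻ y, g y ∂ν := by gcongr

end Jensen

/-- The density with respect to `μ` of the mixture `∑ i, w i • κ i`, for measures `κ i` that are
absolutely continuous with respect to `μ`. It is the sum of the individual Radon–Nikodym
derivatives, rather than the derivative of the sum, to match `StronglyRecurrentSeq` literally. -/
def mixtureDensity {ι X : Type*} [MeasurableSpace X] (κ : ι → Measure X) (w : ι → ℝ≥0∞)
    (μ : Measure X) (x : X) : ℝ≥0∞ :=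
  ∑' i, w i * (κ i).rnDeriv μ x

namespace mixtureDensity

variable {ι X Y : Type*} [MeasurableSpace X] [MeasurableSpace Y]
  {κ : ι → Measure X} {w : ι → ℝ≥0∞} {μ : Measure X} {ν : Measure Y}

lemma comp_support_val :
    mixtureDensity (fun i : Function.support w => κ i) (fun i => w i) μ = mixtureDensity κ w μ :=
  funext fun x => tsum_subtype_eq_of_support_subset (f := fun i => w i * (κ i).rnDeriv μ x)
    (Function.support_mul_subset_left _ _)

protected lemma measurable [Countable ι] : Measurable (mixtureDensity κ w μ) :=
  Measurable.tsum fun i => (Measure.measurable_rnDeriv (κ i) μ).const_mul (w i)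

lemma withDensity_eq_sum [Countable ι] [∀ i, (κ i).HaveLebesgueDecomposition μ]
    (hκ : ∀ i, κ i ≪ μ) :
    μ.withDensity (mixtureDensity κ w μ) = Measure.sum fun i => w i • κ i := by
  have h_tsum : mixtureDensity κ w μ = ∑' i, w i • (κ i).rnDeriv μ :=
    funext fun x => (ENNReal.tsum_apply (f := fun i => w i • (κ i).rnDeriv μ)).symm
  rw [h_tsum, withDensity_tsum fun i => (Measure.measurable_rnDeriv (κ i) μ).const_smul (w i)]
  congr 1 with i : 1
  rw [withDensity_smul _ (Measure.measurable_rnDeriv _ _),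
    Measure.withDensity_rnDeriv_eq _ _ (hκ i)]

lemma map_withDensity_eq [Countable ι] [SigmaFinite ν] [∀ i, SFinite (κ i)] {ψ : X → Y}
    (hψ : MeasurePreserving ψ μ ν) (hκ : ∀ i, κ i ≪ μ) :
    (μ.withDensity (mixtureDensity κ w μ)).map ψ =
      ν.withDensity (mixtureDensity (fun i => (κ i).map ψ) w ν) := by
  have : SigmaFinite μ := hψ.sigmaFinite
  have hκν : ∀ i, (κ i).map ψ ≪ ν := fun i => hψ.map_eq ▸ (hκ i).map hψ.measurable
  rw [withDensity_eq_sum hκ, withDensity_eq_sum hκν, Measure.map_sum hψ.measurable.aemeasurable]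
  simp only [Measure.map_smul]

lemma lintegral_inv_map_le [SigmaFinite ν] [∀ i, SFinite (κ i)] {ψ : X → Y}
    (hψ : MeasurePreserving ψ μ ν) (hκ : ∀ i, κ i ≪ μ) (hw : (Function.support w).Countable) :
    ∫⁻ y, (mixtureDensity (fun i => (κ i).map ψ) w ν y)⁻¹ ∂ν ≤
      ∫⁻ x, (mixtureDensity κ w μ x)⁻¹ ∂μ := by
  have : Countable (Function.support w) := hw
  rw [← comp_support_val (κ := κ), ← comp_support_val (κ := fun i => (κ i).map ψ)]
  exact lintegral_inv_le_of_map_withDensity_eq hψ mixtureDensity.measurable.aemeasurable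
    mixtureDensity.measurable.aemeasurable (map_withDensity_eq hψ fun i => hκ i)

end mixtureDensity

lemma map_map_eq_of_comp_ae_eq_comp {X Y : Type*} [MeasurableSpace X] [MeasurableSpace Y]
    {μ : Measure X} {ν : Measure Y} {ψ : X → Y} {α : X → X} {β : Y → Y}
    (hψ : MeasurePreserving ψ μ ν) (hα : Measurable α) (hβ : Measurable β)
    (h : ψ ∘ α =ᵐ[μ] β ∘ ψ) :
    (μ.map α).map ψ = ν.map β := by
  rw [Measure.map_map hψ.measurable hα, Measure.map_congr h,
    ← Measure.map_map hβ hψ.measurable, hψ.map_eq]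

theorem stronglyRecurrent_factor_general {G X Y : Type*} [Group G]
    [MeasurableSpace X] [MeasurableSpace Y] {μ : Measure X} {ν : Measure Y} [SigmaFinite ν]
    {a : G → X → X} {b : G → Y → Y}
    (ha : ∀ g, Measure.QuasiMeasurePreserving (a g) μ μ) (hb : ∀ g, Measurable (b g))
    {ψ : X → Y} (hψ : MeasurePreserving ψ μ ν) (hψeq : ∀ g, ψ ∘ a g =ᵐ[μ] b g ∘ ψ)
    {η : ℕ → G → ℝ≥0∞} (hη : ∀ n, (Function.support (η n)).Countable)
    (hrec : StronglyRecurrentSeq μ a η) :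
    StronglyRecurrentSeq ν b η := by
  have : SigmaFinite μ := hψ.sigmaFinite
  refine tendsto_of_tendsto_of_tendsto_of_le_of_le tendsto_const_nhds hrec
    (fun _ => zero_le) fun n => ENNReal.tsum_le_tsum fun h => ?_
  have hw : (Function.support fun k : G => η n (h * k⁻¹)).Countable :=
    (hη n).preimage ((mul_right_injective h).comp inv_injective)
  have h_map : ∀ k : G, (μ.map (a k⁻¹)).map ψ = ν.map (b k⁻¹) := fun k =>
    map_map_eq_of_comp_ae_eq_comp hψ (ha k⁻¹).measurable (hb k⁻¹) (hψeq k⁻¹)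
  have h_int := mixtureDensity.lintegral_inv_map_le hψ
    (fun k : G => (ha k⁻¹).absolutelyContinuous) hw
  simp only [h_map] at h_int
  exact mul_le_mul_right h_int _

/-- strong recurrence passes to measure-preserving equivariant factors. -/
theorem stronglyRecurrent_factor
    {G X Y : Type*} [Group G] [Countable G]
    [MeasurableSpace X] [StandardBorelSpace X]
    [MeasurableSpace Y] [StandardBorelSpace Y]
    (μ : Measure X) (ν : Measure Y)
    [IsProbabilityMeasure μ] [IsProbabilityMeasure ν]
    (a : G → X → X) (b : G → Y → Y)
    (haone : ∀ x, a 1 x = x) (hamul : ∀ (g h : G) x, a (g * h) x = a g (a h x))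
    (hames : ∀ g : G, Measurable (a g))
    (hans : ∀ g : G, μ.map (a g) ≪ μ ∧ μ ≪ μ.map (a g))
    (hbone : ∀ y, b 1 y = y) (hbmul : ∀ (g h : G) y, b (g * h) y = b g (b h y))
    (hbmes : ∀ g : G, Measurable (b g))
    (hbns : ∀ g : G, ν.map (b g) ≪ ν ∧ ν ≪ ν.map (b g))
    (ψ : X → Y) (hψ : Measurable ψ)
    (hψeq : ∀ (g : G) (x : X), ψ (a g x) = b g (ψ x))
    (hψpush : μ.map ψ = ν)
    (η : ℕ → G → ℝ≥0∞) (hη : ∀ n, ∑' h : G, η n h = 1)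
    (hrec : StronglyRecurrentSeq μ a η) :
    StronglyRecurrentSeq ν b η :=
  stronglyRecurrent_factor_general (fun g => ⟨hames g, (hans g).1⟩) hbmes ⟨hψ, hψpush⟩
    (fun g => Eventually.of_forall (hψeq g)) (fun n => (η n).support.to_countable) hrec
end
end
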